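/- arXiv:2411.07909 — 2 statements merged into one kernel-verified Lean document; each statement's English description precedes it below -/
import Mathlib

section
/- Let L be the set of pairs (a,b) of the forms (φ_{k−2ε}, φ_{k−2ε} − 4φ_k) with k ≥ 3, ε = ±1, and (ψ_{k−2ε}, ψ_{k−2ε} − 4ψ_k) with k ≥ 0, ε = ±1, (k,ε) ∉ {(0,−1), (1,−1)}. If (a₁,b₁), (a₂,b₂) ∈ L and (a₁,b₁) ≠ (a₂,b₂), then the Lehmer pair associated with (a₁,b₁) and the Lehmer pair associated with (a₂,b₂) are not equivalent. -/
open Complex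

/-- A fixed choice of complex square root of an integer. -/
noncomputable def csqrt (a : ℤ) : ℂ := (a : ℂ) ^ ((1 : ℂ) / 2)

/-- First component of the Lehmer pair associated with `(a, b)`: `(√a - √b)/2`. -/
noncomputable def assocFst (a b : ℤ) : ℂ := (csqrt a - csqrt b) / 2

/-- Second component of the Lehmer pair associated with `(a, b)`: `(√a + √b)/2`. -/
noncomputable def assocSnd (a b : ℤ) : ℂ := (csqrt a + csqrt b) / 2

/-- `(α, β)` is a Lehmer pair: `α`, `β` are algebraic integers, `(α+β)^2` and `αβ` are
nonzero coprime rational integers, and `α/β` is not a root of unity. -/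
def IsLehmerPair (α β : ℂ) : Prop :=
  IsIntegral ℤ α ∧ IsIntegral ℤ β ∧
  (∃ p q : ℤ, ((α + β) ^ 2 = (p : ℂ)) ∧ (α * β = (q : ℂ)) ∧ p ≠ 0 ∧ q ≠ 0 ∧ IsCoprime p q) ∧
  ¬ ∃ n : ℕ, 0 < n ∧ (α / β) ^ n = 1

/-- The Lehmer numbers `ũ_n(α, β)`. -/
noncomputable def lehmerU (α β : ℂ) (n : ℕ) : ℂ :=
  if Odd n then (α ^ n - β ^ n) / (α - β) else (α ^ n - β ^ n) / (α ^ 2 - β ^ 2)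

/-- `z` is an integer divisible by `ℓ`. -/
def IntDvd (ℓ : ℕ) (z : ℂ) : Prop := ∃ m : ℤ, (m : ℂ) = z ∧ (ℓ : ℤ) ∣ m

/-- `ℓ` is a primitive divisor of `ũ_n(α, β)`: `ℓ` is a prime dividing `ũ_n(α, β)` but not
dividing `(α^2 - β^2)^2 ũ_1(α,β) ⋯ ũ_{n-1}(α,β)`. -/
def IsPrimitiveDivisor (ℓ : ℕ) (n : ℕ) (α β : ℂ) : Prop :=
  ℓ.Prime ∧ IntDvd ℓ (lehmerU α β n) ∧
  ¬ IntDvd ℓ ((α ^ 2 - β ^ 2) ^ 2 * ∏ i ∈ Finset.Ico 1 n, lehmerU α β i)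

/-- `(α, β)` is an `n`-defective Lehmer pair: a Lehmer pair such that `ũ_n(α, β)` has no
primitive divisor. -/
def IsDefective (n : ℕ) (α β : ℂ) : Prop :=
  IsLehmerPair α β ∧ ∀ ℓ : ℕ, ¬ IsPrimitiveDivisor ℓ n α β

/-- Two Lehmer pairs `(α₁, β₁)` and `(α₂, β₂)` are equivalent if
`α₁/α₂ = β₁/β₂ ∈ {1, -1, i, -i}`. -/
def LehmerEquiv (α₁ β₁ α₂ β₂ : ℂ) : Prop :=
  ∃ c : ℂ, (c = 1 ∨ c = -1 ∨ c = Complex.I ∨ c = -Complex.I) ∧ α₁ = c * α₂ ∧ β₁ = c * β₂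

/-- `phiAux n = φ_{n-2}`: the Fibonacci sequence shifted so as to start at index `-2`. -/
def phiAux : ℕ → ℤ
  | 0 => -1
  | 1 => 1
  | n + 2 => phiAux (n + 1) + phiAux n

/-- `φ_k` for integer `k ≥ -2`: `φ_{-2} = -1`, `φ_{-1} = 1`, `φ_{k+1} = φ_k + φ_{k-1}`. -/
def phi (k : ℤ) : ℤ := phiAux (k + 2).toNat

/-- `psiAux n = ψ_{n-2}`: the Lucas sequence shifted so as to start at index `-2`. -/
def psiAux : ℕ → ℤ
  | 0 => 3
  | 1 => -1
  | n + 2 => psiAux (n + 1) + psiAux n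

/-- `ψ_k` for integer `k ≥ -2`: `ψ_{-2} = 3`, `ψ_{-1} = -1`, `ψ_{k+1} = ψ_k + ψ_{k-1}`. -/
def psi (k : ℤ) : ℤ := psiAux (k + 2).toNat

/-- `piAux n = π_{n-1}`. -/
def piAux : ℕ → ℤ
  | 0 => 1
  | 1 => 0
  | n + 2 => 2 * piAux (n + 1) + piAux n

/-- `π_k` for integer `k ≥ -1`: `π_{-1} = 1`, `π_0 = 0`, `π_{k+1} = 2π_k + π_{k-1}`. -/
def piSeq (k : ℤ) : ℤ := piAux (k + 1).toNat

/-- `rhoAux n = ρ_{n-1}`. -/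
def rhoAux : ℕ → ℤ
  | 0 => -1
  | 1 => 1
  | n + 2 => 2 * rhoAux (n + 1) + rhoAux n

/-- `ρ_k` for integer `k ≥ -1`: `ρ_{-1} = -1`, `ρ_0 = 1`, `ρ_{k+1} = 2ρ_k + ρ_{k-1}`. -/
def rhoSeq (k : ℤ) : ℤ := rhoAux (k + 1).toNat

/-- `zetaAux i n = ζ^{(i)}_{n-1}`. -/
def zetaAux (i : ℕ) : ℕ → ℤ
  | 0 => if i = 0 then -1 else if i = 1 then 2 else if i = 2 then 1 else -1
  | 1 => if i = 0 then 0 else 1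
  | n + 2 => 4 * zetaAux i (n + 1) - zetaAux i n

/-- `ζ^{(i)}_k` for integer `k ≥ -1`, satisfying `ζ^{(i)}_{k+1} = 4ζ^{(i)}_k - ζ^{(i)}_{k-1}`
with initial values `(ζ^{(i)}_{-1}, ζ^{(i)}_0)` equal to `(-1, 0)`, `(2, 1)`, `(1, 1)`,
`(-1, 1)` for `i = 0, 1, 2, 3` respectively. -/
def zeta (i : ℕ) (k : ℤ) : ℤ := zetaAux i (k + 1).toNat

/-- The set `L` of pairs `(a, b)` from the `n = 5` entry of the classification table. -/
def InL5 (a b : ℤ) : Prop :=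
  (∃ k ε : ℤ, (ε = 1 ∨ ε = -1) ∧ 3 ≤ k ∧
    a = phi (k - 2 * ε) ∧ b = phi (k - 2 * ε) - 4 * phi k) ∨
  (∃ k ε : ℤ, (ε = 1 ∨ ε = -1) ∧ 0 ≤ k ∧
    ¬ ((k = 0 ∧ ε = -1) ∨ (k = 1 ∧ ε = -1)) ∧
    a = psi (k - 2 * ε) ∧ b = psi (k - 2 * ε) - 4 * psi k)

/-!
The integers `a = (α + β) ^ 2` and `b = (α - β) ^ 2` are recovered from the pair associated with
`(a, b)`, and scaling the pair by `c` multiplies both by `c ^ 2`. Hence an equivalence forces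
`(a₁, b₁) = ±(a₂, b₂)`. On the list `L` the difference `a - b`, being `4 φ_k` or `4 ψ_k`, is
positive, which rules out the minus sign.
-/

theorem csqrt_sq (a : ℤ) : csqrt a ^ 2 = a := by
  simp [csqrt]

theorem assocFst_add_assocSnd_sq (a b : ℤ) : (assocFst a b + assocSnd a b) ^ 2 = a := by
  rw [← csqrt_sq a, assocFst, assocSnd]
  ring

theorem assocFst_sub_assocSnd_sq (a b : ℤ) : (assocFst a b - assocSnd a b) ^ 2 = b := by
  rw [← csqrt_sq b, assocFst, assocSnd]
  ring

theorem LehmerEquiv.add_sq_eq_and_sub_sq_eq_or_neg {α₁ β₁ α₂ β₂ : ℂ}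
    (h : LehmerEquiv α₁ β₁ α₂ β₂) :
    ((α₁ + β₁) ^ 2 = (α₂ + β₂) ^ 2 ∧ (α₁ - β₁) ^ 2 = (α₂ - β₂) ^ 2) ∨
      ((α₁ + β₁) ^ 2 = -(α₂ + β₂) ^ 2 ∧ (α₁ - β₁) ^ 2 = -(α₂ - β₂) ^ 2) := by
  obtain ⟨c, hc, rfl, rfl⟩ := h
  have hc_sq : c ^ 2 = 1 ∨ c ^ 2 = -1 := by
    rcases hc with rfl | rfl | rfl | rfl <;> simp
  simp only [← mul_add, ← mul_sub, mul_pow]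
  rcases hc_sq with hc_sq | hc_sq <;> simp [hc_sq]

theorem LehmerEquiv.assoc_eq_or_eq_neg {a₁ b₁ a₂ b₂ : ℤ}
    (h : LehmerEquiv (assocFst a₁ b₁) (assocSnd a₁ b₁) (assocFst a₂ b₂) (assocSnd a₂ b₂)) :
    (a₁ = a₂ ∧ b₁ = b₂) ∨ (a₁ = -a₂ ∧ b₁ = -b₂) := by
  have h_sq := h.add_sq_eq_and_sub_sq_eq_or_neg
  simp only [assocFst_add_assocSnd_sq, assocFst_sub_assocSnd_sq] at h_sq
  exact_mod_cast h_sq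

theorem pos_of_add_recurrence {M : Type*} [AddZeroClass M] [Preorder M] [AddLeftStrictMono M]
    {u : ℕ → M} (hu : ∀ n, u (n + 2) = u (n + 1) + u n) (h₀ : 0 < u 0) (h₁ : 0 < u 1) (n : ℕ) :
    0 < u n := by
  induction n using Nat.twoStepInduction with
  | zero => exact h₀
  | one => exact h₁
  | more n ih₀ ih₁ => exact hu n ▸ add_pos ih₁ ih₀

theorem phi_pos {k : ℤ} (hk : 0 < k) : 0 < phi k := by
  obtain ⟨n, hn⟩ : ∃ n, (k + 2).toNat = n + 3 := ⟨(k - 1).toNat, by lia⟩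
  rw [phi, hn]
  exact pos_of_add_recurrence (u := fun n ↦ phiAux (n + 3)) (fun _ ↦ rfl)
    (by decide) (by decide) n

theorem psi_pos {k : ℤ} (hk : 0 ≤ k) : 0 < psi k := by
  obtain ⟨n, hn⟩ : ∃ n, (k + 2).toNat = n + 2 := ⟨k.toNat, by lia⟩
  rw [psi, hn]
  exact pos_of_add_recurrence (u := fun n ↦ psiAux (n + 2)) (fun _ ↦ rfl)
    (by decide) (by decide) n

theorem InL5.lt {a b : ℤ} (h : InL5 a b) : b < a := by
  rcases h with ⟨k, ε, -, hk, rfl, rfl⟩ | ⟨k, ε, -, hk, -, rfl, rfl⟩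
  · linarith [phi_pos (show 0 < k by lia)]
  · linarith [psi_pos hk]

theorem five_defective_pairs_inequiv_general {a₁ b₁ a₂ b₂ : ℤ}
    (h₁ : b₁ < a₁) (h₂ : b₂ < a₂) (hne : (a₁, b₁) ≠ (a₂, b₂)) :
    ¬ LehmerEquiv (assocFst a₁ b₁) (assocSnd a₁ b₁)
      (assocFst a₂ b₂) (assocSnd a₂ b₂) := by
  intro hequiv
  rcases hequiv.assoc_eq_or_eq_neg with ⟨ha, hb⟩ | ⟨ha, hb⟩
  · exact hne (Prod.ext ha hb)
  · lia

theorem five_defective_pairs_inequiv (a₁ b₁ a₂ b₂ : ℤ)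
    (h₁ : InL5 a₁ b₁) (h₂ : InL5 a₂ b₂) (hne : (a₁, b₁) ≠ (a₂, b₂)) :
    ¬ LehmerEquiv (assocFst a₁ b₁) (assocSnd a₁ b₁)
      (assocFst a₂ b₂) (assocSnd a₂ b₂) :=
  five_defective_pairs_inequiv_general h₁.lt h₂.lt hne
end

section
/- If i₁, i₂ ∈ {0,1,2,3} with i₁ ≠ i₂, and k₁, k₂ ≥ 0 are integers with ζ^{(i₁)}_{k₁} = ζ^{(i₂)}_{k₂}, then ζ^{(i₁)}_{k₁} = 1; that is, among the terms with non-negative index, the only value occurring in more than one of the four sequences ζ^{(0)}, ζ^{(1)}, ζ^{(2)}, ζ^{(3)} is 1, which occurs as ζ^{(0)}_1, ζ^{(1)}_0, ζ^{(2)}_0 and ζ^{(3)}_0. -/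
open Complex

/-!
The numbers `xₖ = ζ^{(1)}_k` and `yₖ = ζ^{(0)}_k` are the coordinates of
`(2 + √3)ᵏ = xₖ + yₖ√3`. For every `k ≥ 0` the terms
`ζ^{(1)}_k`, `ζ^{(2)}_k`, `ζ^{(0)}_{k+1}`, `ζ^{(3)}_k` are `xₖ + r yₖ` with `r = 0, 1, 2, 3`,
and the next block begins with `xₖ₊₁ = (xₖ + 3yₖ) + xₖ`. Concatenating these blocks therefore
lists all terms except `ζ^{(0)}_0 = 0` in weakly increasing order. The increments are
`xₖ > 0` and `yₖ`, and `yₖ > 0` for `k ≥ 1`, so repetitions occur only in the initial block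
`1, 1, 1, 1`.
-/

theorem le_of_monotone_of_strictMonoOn_Ici_of_eq {α β : Type*} [LinearOrder α] [Preorder β]
    {f : α → β} {a b c : α} (hf : Monotone f) (hfc : StrictMonoOn f (Set.Ici c))
    (hab : a ≠ b) (h : f a = f b) : b ≤ c := by
  by_contra! hcb
  rcases hab.lt_or_gt with hlt | hgt
  · have hmax : f (max a c) < f b := hfc (le_max_right a c) hcb.le (max_lt hlt hcb)
    exact ((hf (le_max_left a c)).trans_lt hmax).ne h
  · exact (hfc hcb.le (hcb.trans hgt).le hgt).ne' h

theorem zeta_add_two (i k : ℕ) :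
    zeta i ((k + 2 : ℕ) : ℤ) = 4 * zeta i ((k + 1 : ℕ) : ℤ) - zeta i k := rfl

theorem zeta_zero_one_succ (k : ℕ) :
    zeta 0 ((k + 1 : ℕ) : ℤ) = 2 * zeta 0 k + zeta 1 k ∧
      zeta 1 ((k + 1 : ℕ) : ℤ) = 3 * zeta 0 k + 2 * zeta 1 k := by
  induction k with
  | zero => decide
  | succ k ih =>
    have h₀ := zeta_add_two 0 k
    have h₁ := zeta_add_two 1 k
    constructor <;> linarith

theorem zeta_two_eq : ∀ k : ℕ, zeta 2 k = zeta 1 k + zeta 0 k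
  | 0 => rfl
  | 1 => rfl
  | k + 2 => by
    simp only [zeta_add_two, zeta_two_eq k, zeta_two_eq (k + 1)]
    ring

theorem zeta_three_eq : ∀ k : ℕ, zeta 3 k = zeta 1 k + 3 * zeta 0 k
  | 0 => rfl
  | 1 => rfl
  | k + 2 => by
    simp only [zeta_add_two, zeta_three_eq k, zeta_three_eq (k + 1)]
    ring

theorem zeta_zero_nonneg_and_one_pos (k : ℕ) : 0 ≤ zeta 0 k ∧ 0 < zeta 1 k := by
  induction k with
  | zero => decide
  | succ k ih =>
    obtain ⟨h₀, h₁⟩ := zeta_zero_one_succ k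
    constructor <;> linarith

theorem zeta_zero_nonneg (k : ℕ) : 0 ≤ zeta 0 k := (zeta_zero_nonneg_and_one_pos k).1

theorem zeta_one_pos (k : ℕ) : 0 < zeta 1 k := (zeta_zero_nonneg_and_one_pos k).2

theorem zeta_zero_pos {k : ℕ} (hk : 0 < k) : 0 < zeta 0 k := by
  obtain ⟨k, rfl⟩ := Nat.exists_eq_add_one.mpr hk
  linarith [(zeta_zero_one_succ k).1, zeta_zero_nonneg k, zeta_one_pos k]

theorem zeta_pos_of_ne_zero {i : ℕ} (hi : i ≤ 3) (hi₀ : i ≠ 0) (k : ℕ) : 0 < zeta i k := by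
  have h₀ := zeta_zero_nonneg k
  have h₁ := zeta_one_pos k
  interval_cases i
  · contradiction
  · exact h₁
  · linarith [zeta_two_eq k]
  · linarith [zeta_three_eq k]

/-- The increasing enumeration, with repetitions, of all terms `ζ^{(i)}_k` with `k ≥ 0` other than
`ζ^{(0)}_0`: positions `4k, …, 4k + 3` hold
`ζ^{(1)}_k`, `ζ^{(2)}_k`, `ζ^{(0)}_{k+1}`, `ζ^{(3)}_k`, an arithmetic progression. -/
def mergedZeta (n : ℕ) : ℤ := zeta 1 (n / 4 : ℕ) + (n % 4 : ℕ) * zeta 0 (n / 4 : ℕ)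

theorem mergedZeta_four_mul_add (k : ℕ) {r : ℕ} (hr : r < 4) :
    mergedZeta (4 * k + r) = zeta 1 k + r * zeta 0 k := by
  rw [mergedZeta, Nat.mul_add_div four_pos, Nat.div_eq_of_lt hr, Nat.mul_add_mod,
    Nat.mod_eq_of_lt hr, add_zero]

theorem mergedZeta_add_one (n : ℕ) :
    mergedZeta (n + 1) = mergedZeta n + zeta (if n % 4 = 3 then 1 else 0) (n / 4 : ℕ) := by
  split_ifs with hn
  · have hdiv : (n + 1) / 4 = n / 4 + 1 := by omega
    have hmod : (n + 1) % 4 = 0 := by omega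
    rw [mergedZeta, mergedZeta, hdiv, hmod, hn, (zeta_zero_one_succ (n / 4)).2]
    push_cast
    ring
  · have hdiv : (n + 1) / 4 = n / 4 := by omega
    have hmod : (n + 1) % 4 = n % 4 + 1 := by omega
    rw [mergedZeta, mergedZeta, hdiv, hmod, Nat.cast_add_one]
    ring

theorem mergedZeta_monotone : Monotone mergedZeta := by
  refine monotone_nat_of_le_succ fun n => ?_
  rw [mergedZeta_add_one, le_add_iff_nonneg_right]
  split_ifs
  · exact (zeta_one_pos _).le
  · exact zeta_zero_nonneg _

theorem mergedZeta_strictMonoOn : StrictMonoOn mergedZeta (Set.Ici 3) := by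
  refine strictMonoOn_of_lt_add_one Set.ordConnected_Ici fun n _ hn _ => ?_
  rw [mergedZeta_add_one, lt_add_iff_pos_right]
  split_ifs with hmod
  · exact zeta_one_pos _
  · have hn₃ : 3 ≤ n := hn
    exact zeta_zero_pos (by omega)

theorem mergedZeta_eq_one_of_eq {m n : ℕ} (hmn : m ≠ n) (h : mergedZeta m = mergedZeta n) :
    mergedZeta n = 1 := by
  have hn : n ≤ 3 :=
    le_of_monotone_of_strictMonoOn_Ici_of_eq mergedZeta_monotone mergedZeta_strictMonoOn hmn h
  interval_cases n <;> decide

/-- The residue modulo `4` of the positions in `mergedZeta` that hold terms of `ζ^{(i)}`,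
for `i ≤ 3`. -/
def zetaResidue : ℕ → ℕ
  | 0 => 2
  | 1 => 0
  | 2 => 1
  | _ => 3

theorem zetaResidue_injOn : Set.InjOn zetaResidue (Set.Iic 3) := by
  intro i (hi : i ≤ 3) j (hj : j ≤ 3) h
  interval_cases i <;> interval_cases j <;> simp_all [zetaResidue]

theorem exists_mergedZeta_eq {i k : ℕ} (hi : i ≤ 3) (h₀ : zeta i k ≠ 0) :
    ∃ n, n % 4 = zetaResidue i ∧ mergedZeta n = zeta i k := by
  suffices h : ∃ l, mergedZeta (4 * l + zetaResidue i) = zeta i k by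
    obtain ⟨l, hl⟩ := h
    refine ⟨_, ?_, hl⟩
    interval_cases i <;> simp only [zetaResidue] <;> omega
  interval_cases i
  · cases k with
    | zero => exact absurd rfl h₀
    | succ l =>
      refine ⟨l, ?_⟩
      rw [zetaResidue, mergedZeta_four_mul_add l (by norm_num), (zeta_zero_one_succ l).1]
      push_cast
      ring
  · exact ⟨k, by simp [zetaResidue, mergedZeta]⟩
  · exact ⟨k, by simp [zetaResidue, mergedZeta_four_mul_add k, zeta_two_eq]⟩
  · exact ⟨k, by simp [zetaResidue, mergedZeta_four_mul_add k, zeta_three_eq]⟩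

theorem zeta_common_value_eq_one :
    (∀ i₁ i₂ : ℕ, i₁ ≤ 3 → i₂ ≤ 3 → i₁ ≠ i₂ → ∀ k₁ k₂ : ℤ, 0 ≤ k₁ → 0 ≤ k₂ →
      zeta i₁ k₁ = zeta i₂ k₂ → zeta i₁ k₁ = 1) ∧
    zeta 0 1 = 1 ∧ zeta 1 0 = 1 ∧ zeta 2 0 = 1 ∧ zeta 3 0 = 1 := by
  refine ⟨fun i j hi hj hij k l hk hl h => ?_, rfl, rfl, rfl, rfl⟩
  lift k to ℕ using hk
  lift l to ℕ using hl
  have eq_zero {i k : ℕ} (hi : i ≤ 3) (h₀ : zeta i k = 0) : i = 0 :=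
    by_contra fun hi₀ => (zeta_pos_of_ne_zero hi hi₀ k).ne' h₀
  have h_ne : zeta i k ≠ 0 := fun h₀ =>
    hij ((eq_zero hi h₀).trans (eq_zero hj (h ▸ h₀)).symm)
  obtain ⟨m, hm, hmk⟩ := exists_mergedZeta_eq hi h_ne
  obtain ⟨n, hn, hnl⟩ := exists_mergedZeta_eq hj (h ▸ h_ne)
  have hnm : n ≠ m := by
    rintro rfl
    exact hij (zetaResidue_injOn hi hj (hm.symm.trans hn))
  rw [← hmk]
  exact mergedZeta_eq_one_of_eq hnm (by rw [hmk, hnl, h])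
end
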